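/- Let p ≥ 3 and q ≥ 5. Suppose Δ₁, S₁ and Δ₂, S₂ arise from two collections of two words of length p as above, with Δᵢ(x) > 0 for real x ≥ 4, and let λᵢ ∈ (q−q^{−p+2}, q) be the unique root of (q−x)Δᵢ(x) − Sᵢ(x) in that interval. If S₁(x)/Δ₁(x) < S₂(x)/Δ₂(x) for all x ∈ (q−q^{−p+2}, q), then λ₂ < λ₁. -/

import Mathlib

/-!
At `λ₁` the root equation of the first pair reads `S₁/Δ₁ = q - λ₁`, so `S₁/Δ₁ < S₂/Δ₂` makes
`(q - x)Δ₂(x) - S₂(x)` negative there. Being positive at the left endpoint, this function vanishes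
somewhere to the left of `λ₁`, and it has no other root than `λ₂`.
-/

lemma le_sub_zpow_of_nonpos {K : Type*} [Field K] [LinearOrder K] [IsStrictOrderedRing K]
    {c q : K} {n : ℤ} (hc : 0 ≤ c) (hq : c + 1 ≤ q) (hn : n ≤ 0) : c ≤ q - q ^ n := by
  have hpow : q ^ n ≤ 1 := zpow_le_one_of_nonpos₀ (by linarith) hn
  linarith

lemma mul_sub_neg_of_div_lt_div {K : Type*} [Field K] [LinearOrder K] [IsStrictOrderedRing K]
    {c d₁ s₁ d₂ s₂ : K} (hd₁ : d₁ ≠ 0) (hd₂ : 0 < d₂) (hroot : c * d₁ - s₁ = 0)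
    (hlt : s₁ / d₁ < s₂ / d₂) : c * d₂ - s₂ < 0 := by
  have hc : c = s₁ / d₁ := eq_div_of_mul_eq hd₁ (sub_eq_zero.mp hroot)
  rwa [sub_neg, ← lt_div_iff₀ hd₂, hc]

lemma lt_of_unique_preimage_of_lt_of_lt {α β : Type*}
    [ConditionallyCompleteLinearOrder α] [TopologicalSpace α] [OrderTopology α] [DenselyOrdered α]
    [LinearOrder β] [TopologicalSpace β] [OrderClosedTopology β]
    {f : α → β} {a b y z : α} {c : β} (hf : ContinuousOn f (Set.Icc a y)) (hy : y ∈ Set.Ioo a b)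
    (huniq : ∀ x ∈ Set.Ioo a b, f x = c → x = z) (hfy : f y < c) (hfa : c < f a) : z < y := by
  obtain ⟨x, ⟨hax, hxy⟩, hfx⟩ := intermediate_value_Ioo' hy.1.le hf ⟨hfy, hfa⟩
  exact huniq x ⟨hax, hxy.trans hy.2⟩ hfx ▸ hxy

theorem lam_comparison_general {a q lam₁ lam₂ : ℝ} {D₁ S₁ D₂ S₂ : ℝ → ℝ}
    (hD₂c : ContinuousOn D₂ (Set.Icc a lam₁)) (hS₂c : ContinuousOn S₂ (Set.Icc a lam₁))
    (hD₁ : D₁ lam₁ ≠ 0) (hD₂ : 0 < D₂ lam₁) (hlam₁ : lam₁ ∈ Set.Ioo a q)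
    (hroot₁ : (q - lam₁) * D₁ lam₁ - S₁ lam₁ = 0)
    (huniq₂ : ∀ x ∈ Set.Ioo a q, (q - x) * D₂ x - S₂ x = 0 → x = lam₂)
    (hend₂ : 0 < (q - a) * D₂ a - S₂ a)
    (hr : S₁ lam₁ / D₁ lam₁ < S₂ lam₁ / D₂ lam₁) : lam₂ < lam₁ := by
  have hcont : ContinuousOn (fun x ↦ (q - x) * D₂ x - S₂ x) (Set.Icc a lam₁) := by fun_prop
  have hneg : (q - lam₁) * D₂ lam₁ - S₂ lam₁ < 0 := mul_sub_neg_of_div_lt_div hD₁ hD₂ hroot₁ hr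
  exact lt_of_unique_preimage_of_lt_of_lt hcont hlam₁ huniq₂ hneg hend₂

/-- Let `p ≥ 3`, `q ≥ 5`. Suppose `Δᵢ, Sᵢ` (i = 1, 2) are continuous functions with
`Δᵢ(x) > 0` for `x ≥ 4`, and `λᵢ ∈ (q − q^{2−p}, q)` is the unique root of
`(q − x)Δᵢ(x) − Sᵢ(x)` in that interval, with `(q − x)Δᵢ(x) − Sᵢ(x) > 0` at the left
endpoint `x = q − q^{2−p}`. If `S₁(x)/Δ₁(x) < S₂(x)/Δ₂(x)` for all
`x ∈ (q − q^{2−p}, q)`, then `λ₂ < λ₁`. -/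
theorem lam_comparison (p q : ℕ) (hp : 3 ≤ p) (hq : 5 ≤ q)
    (D₁ S₁ D₂ S₂ : ℝ → ℝ)
    (hD₁c : Continuous D₁) (hS₁c : Continuous S₁)
    (hD₂c : Continuous D₂) (hS₂c : Continuous S₂)
    (hD₁pos : ∀ x : ℝ, 4 ≤ x → 0 < D₁ x)
    (hD₂pos : ∀ x : ℝ, 4 ≤ x → 0 < D₂ x)
    (lam₁ lam₂ : ℝ)
    (hlam₁ : lam₁ ∈ Set.Ioo ((q : ℝ) - (q : ℝ) ^ ((2 : ℤ) - (p : ℤ))) (q : ℝ))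
    (hlam₂ : lam₂ ∈ Set.Ioo ((q : ℝ) - (q : ℝ) ^ ((2 : ℤ) - (p : ℤ))) (q : ℝ))
    (hroot₁ : ((q : ℝ) - lam₁) * D₁ lam₁ - S₁ lam₁ = 0)
    (hroot₂ : ((q : ℝ) - lam₂) * D₂ lam₂ - S₂ lam₂ = 0)
    (huniq₁ : ∀ x ∈ Set.Ioo ((q : ℝ) - (q : ℝ) ^ ((2 : ℤ) - (p : ℤ))) (q : ℝ),
      ((q : ℝ) - x) * D₁ x - S₁ x = 0 → x = lam₁)
    (huniq₂ : ∀ x ∈ Set.Ioo ((q : ℝ) - (q : ℝ) ^ ((2 : ℤ) - (p : ℤ))) (q : ℝ),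
      ((q : ℝ) - x) * D₂ x - S₂ x = 0 → x = lam₂)
    (hend₁ : 0 < ((q : ℝ) - ((q : ℝ) - (q : ℝ) ^ ((2 : ℤ) - (p : ℤ)))) *
        D₁ ((q : ℝ) - (q : ℝ) ^ ((2 : ℤ) - (p : ℤ))) -
        S₁ ((q : ℝ) - (q : ℝ) ^ ((2 : ℤ) - (p : ℤ))))
    (hend₂ : 0 < ((q : ℝ) - ((q : ℝ) - (q : ℝ) ^ ((2 : ℤ) - (p : ℤ)))) *
        D₂ ((q : ℝ) - (q : ℝ) ^ ((2 : ℤ) - (p : ℤ))) -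
        S₂ ((q : ℝ) - (q : ℝ) ^ ((2 : ℤ) - (p : ℤ))))
    (hr : ∀ x ∈ Set.Ioo ((q : ℝ) - (q : ℝ) ^ ((2 : ℤ) - (p : ℤ))) (q : ℝ),
      S₁ x / D₁ x < S₂ x / D₂ x) :
    lam₂ < lam₁ := by
  have h4 : 4 ≤ lam₁ := hlam₁.1.le.trans' <| le_sub_zpow_of_nonpos (by norm_num)
    (by linarith [show (5 : ℝ) ≤ q from mod_cast hq]) (by lia)
  exact lam_comparison_general hD₂c.continuousOn hS₂c.continuousOn (hD₁pos _ h4).ne' (hD₂pos _ h4)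
    hlam₁ hroot₁ huniq₂ hend₂ (hr _ hlam₁)
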